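/- Let (f, τ) and (g, ω) be two p-ASFs for X. Then the following are equivalent: (i) there exist bounded invertible operators T_{f,g}, T_{τ,ω} : X → X with g_n = f_n ∘ T_{f,g} and ω_n = T_{τ,ω}τ_n for all n ∈ ℕ; (ii) there exist bounded invertible operators T_{f,g}, T_{τ,ω} : X → X with θ_g = θ_f ∘ T_{f,g} and θ_ω = T_{τ,ω} ∘ θ_τ. Moreover, if these hold, the invertible operators are unique and are given by T_{f,g} = S_{f,τ}^{-1} ∘ θ_τ ∘ θ_g and T_{τ,ω} = θ_ω ∘ θ_f ∘ S_{f,τ}^{-1}. -/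

import Mathlib

open scoped ENNReal

/-- A p-approximate Schauder frame (p-ASF) for a Banach space `X`:
functionals `f`, vectors `τ`, an invertible frame operator `S` with
`S x = ∑ f n x • τ n`, a bounded analysis operator `θf` into `ℓ^p(ℕ)`,
and a bounded synthesis operator `θτ` from `ℓ^p(ℕ)`. -/
structure pASF (p : ℝ≥0∞) [Fact (1 ≤ p)] (X : Type*) [NormedAddCommGroup X]
    [NormedSpace ℝ X] where
  f : ℕ → X →L[ℝ] ℝ
  τ : ℕ → X
  S : X ≃L[ℝ] X
  hS : ∀ x : X, HasSum (fun n => f n x • τ n) (S x)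
  θf : X →L[ℝ] lp (fun _ : ℕ => ℝ) p
  hθf : ∀ (x : X) (n : ℕ), (θf x : ℕ → ℝ) n = f n x
  θτ : lp (fun _ : ℕ => ℝ) p →L[ℝ] X
  hθτ : ∀ a : lp (fun _ : ℕ => ℝ) p, HasSum (fun n => (a : ℕ → ℝ) n • τ n) (θτ a)

/-!
The operator `θf` is determined by its coordinates `f n`, and `θτ`, being given by a convergent
series in the `τ n`, by its values `τ n` on the unit vectors of `ℓ^p`; so the conditions on
sequences are the conditions on operators. The frame operator factors as `S = θτ ∘ θf`, so
`S⁻¹ ∘ θτ` is a left inverse of `θf` and `θf ∘ S⁻¹` a right inverse of `θτ`. Cancelling with these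
inverses solves `θg = θf ∘ T` and `θω = U ∘ θτ` for `T` and `U`.
-/

namespace pASF

variable {X Y : Type*} [NormedAddCommGroup X] [NormedSpace ℝ X]
  [NormedAddCommGroup Y] [NormedSpace ℝ Y] {p : ℝ≥0∞} [Fact (1 ≤ p)]

theorem θτ_comp_θf (F : pASF p X) : F.θτ.comp F.θf = (F.S : X →L[ℝ] X) := by
  ext x
  have hsum : HasSum (fun n => F.f n x • F.τ n) (F.θτ (F.θf x)) := by
    simpa only [F.hθf] using F.hθτ (F.θf x)
  exact hsum.unique (F.hS x)

theorem S_symm_comp_θτ_comp_θf (F : pASF p X) :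
    ((F.S.symm : X →L[ℝ] X).comp F.θτ).comp F.θf = .id ℝ X := by
  rw [ContinuousLinearMap.comp_assoc, θτ_comp_θf, F.S.coe_symm_comp_coe]

theorem θτ_comp_θf_comp_S_symm (F : pASF p X) :
    (F.θτ.comp F.θf).comp (F.S.symm : X →L[ℝ] X) = .id ℝ X := by
  rw [θτ_comp_θf, F.S.coe_comp_coe_symm]

theorem θτ_single (F : pASF p X) (n : ℕ) : F.θτ (lp.single p n (1 : ℝ)) = F.τ n := by
  have hsum : HasSum (fun m => (lp.single p n (1 : ℝ) : ℕ → ℝ) m • F.τ m)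
      ((lp.single p n (1 : ℝ) : ℕ → ℝ) n • F.τ n) :=
    hasSum_single n fun m hm => by rw [lp.single_apply_ne p n _ hm, zero_smul]
  rw [(F.hθτ _).unique hsum, lp.single_apply_self, one_smul]

theorem θf_eq_comp_iff (F : pASF p X) (G : pASF p Y) (T : Y →L[ℝ] X) :
    G.θf = F.θf.comp T ↔ ∀ n, G.f n = (F.f n).comp T := by
  constructor
  · intro h n
    ext y
    rw [← G.hθf, h, ContinuousLinearMap.comp_apply, F.hθf, ContinuousLinearMap.comp_apply]
  · intro h
    ext y n
    rw [G.hθf, h, ContinuousLinearMap.comp_apply, ContinuousLinearMap.comp_apply, F.hθf]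

theorem θτ_eq_comp_iff (F : pASF p X) (G : pASF p Y) (U : X →L[ℝ] Y) :
    G.θτ = U.comp F.θτ ↔ ∀ n, G.τ n = U (F.τ n) := by
  constructor
  · intro h n
    rw [← G.θτ_single, h, ContinuousLinearMap.comp_apply, F.θτ_single]
  · intro h
    refine ContinuousLinearMap.ext fun a => (G.hθτ a).unique ?_
    simpa only [h, map_smul, ContinuousLinearMap.comp_apply] using U.hasSum (F.hθτ a)

theorem eq_of_eq_θf_comp {F : pASF p X} {A : Y →L[ℝ] lp (fun _ : ℕ => ℝ) p} {T : Y →L[ℝ] X}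
    (h : A = F.θf.comp T) : T = ((F.S.symm : X →L[ℝ] X).comp F.θτ).comp A := by
  rw [h, ← ContinuousLinearMap.comp_assoc, S_symm_comp_θτ_comp_θf, ContinuousLinearMap.id_comp]

theorem eq_of_eq_comp_θτ {F : pASF p X} {B : lp (fun _ : ℕ => ℝ) p →L[ℝ] Y} {U : X →L[ℝ] Y}
    (h : B = U.comp F.θτ) : U = (B.comp F.θf).comp (F.S.symm : X →L[ℝ] X) := by
  rw [h, ContinuousLinearMap.comp_assoc U, ContinuousLinearMap.comp_assoc U,
    θτ_comp_θf_comp_S_symm, ContinuousLinearMap.comp_id]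

end pASF

theorem stmt_13_general {X Y : Type*} [NormedAddCommGroup X] [NormedSpace ℝ X]
    [NormedAddCommGroup Y] [NormedSpace ℝ Y] {p : ℝ≥0∞} [Fact (1 ≤ p)]
    (F : pASF p X) (G : pASF p Y) (T : Y →L[ℝ] X) (U : X →L[ℝ] Y) :
    (((∀ n, G.f n = (F.f n).comp T) ∧ (∀ n, G.τ n = U (F.τ n))) ↔
      (G.θf = F.θf.comp T ∧ G.θτ = U.comp F.θτ)) ∧
    ((G.θf = F.θf.comp T ∧ G.θτ = U.comp F.θτ) →
      T = ((F.S.symm : X →L[ℝ] X).comp F.θτ).comp G.θf ∧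
      U = (G.θτ.comp F.θf).comp (F.S.symm : X →L[ℝ] X)) :=
  ⟨and_congr (F.θf_eq_comp_iff G T).symm (F.θτ_eq_comp_iff G U).symm,
    And.imp pASF.eq_of_eq_θf_comp pASF.eq_of_eq_comp_θτ⟩

/-- similarity of two p-ASFs is equivalent to the corresponding
operator equations on the analysis/synthesis operators; moreover the invertible
operators are unique and are given by `T_{f,g} = S⁻¹ ∘ θ_τ ∘ θ_g` and
`T_{τ,ω} = θ_ω ∘ θ_f ∘ S⁻¹`. -/
theorem stmt_13 {X : Type*} [NormedAddCommGroup X] [NormedSpace ℝ X] [CompleteSpace X]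
    (p : ℝ≥0∞) [Fact (1 ≤ p)] (hp : p ≠ ∞) (F G : pASF p X) :
    ((∃ Tfg Tτω : X ≃L[ℝ] X,
        (∀ n, G.f n = (F.f n).comp (Tfg : X →L[ℝ] X)) ∧
        (∀ n, G.τ n = Tτω (F.τ n))) ↔
     (∃ Tfg Tτω : X ≃L[ℝ] X,
        G.θf = F.θf.comp (Tfg : X →L[ℝ] X) ∧
        G.θτ = (Tτω : X →L[ℝ] X).comp F.θτ)) ∧
    (∀ Tfg Tτω : X ≃L[ℝ] X,
      ((∀ n, G.f n = (F.f n).comp (Tfg : X →L[ℝ] X)) ∧ (∀ n, G.τ n = Tτω (F.τ n))) →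
        (Tfg : X →L[ℝ] X) = ((F.S.symm : X →L[ℝ] X).comp F.θτ).comp G.θf ∧
        (Tτω : X →L[ℝ] X) = (G.θτ.comp F.θf).comp (F.S.symm : X →L[ℝ] X)) ∧
    (∀ Tfg Tτω : X ≃L[ℝ] X,
      (G.θf = F.θf.comp (Tfg : X →L[ℝ] X) ∧ G.θτ = (Tτω : X →L[ℝ] X).comp F.θτ) →
        (Tfg : X →L[ℝ] X) = ((F.S.symm : X →L[ℝ] X).comp F.θτ).comp G.θf ∧
        (Tτω : X →L[ℝ] X) = (G.θτ.comp F.θf).comp (F.S.symm : X →L[ℝ] X)) := by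
  have similar (T U : X ≃L[ℝ] X) := stmt_13_general F G (T : X →L[ℝ] X) (U : X →L[ℝ] X)
  exact ⟨exists₂_congr fun T U => (similar T U).1,
    fun T U h => (similar T U).2 ((similar T U).1.mp h), fun T U => (similar T U).2⟩
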